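/- Let Q be the positive radial ground state solving −ΔQ + Q − Q³ = 0 on ℝ², with exponential decay. Define Q_δ = δ^{-1} Q(δ^{-1}·) and 𝐐_δ(r) = Q_δ(r) − Q_δ(1) on the unit disc 𝔻. Then H(𝐐_δ) := (1/2)∫_𝔻 |∇𝐐_δ|² − (1/4)∫_𝔻 |𝐐_δ|⁴ = O(e^{-c/δ}) as δ → 0, for some c > 0. -/

import Mathlib

open MeasureTheory

/-!
The change of variables `x ↦ δ⁻¹ x` turns the energy into `R²` times the same energy of `Q - Q(R)`
on the disc of radius `R = δ⁻¹` (`energy_scaling`), so an estimate `O(R² e^{-cR})` on that disc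
suffices (`energy_ball_le`).

The energy balance comes from the field
`V = Q∇Q + (x·∇Q)∇Q - x|∇Q|²/2 + x(Q⁴/4 - Q²/2)`, whose divergence is `|∇Q|² - Q⁴/2` when
`ΔQ = Q - Q³` (`div_pohoField`). The field `V` decays exponentially, so this divergence has zero
integral over the plane (`integral_div_eq_zero`). No decay of the second derivatives of `Q` is
available, hence the cutoff argument there: it only needs `V` and `div V` to be integrable.

On the disc of radius `R`, the integral of `|∇Q|² - Q⁴/2` therefore equals minus its integral over
the complement, which is `O(e^{-cR})` by the decay of `Q` and `∇Q`; replacing `Q⁴` by `(Q - Q(R))⁴`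
costs at most a constant times `Q(R) R²`.
-/

/-- The Laplacian of a function on `ℝ²`, as the sum of second partial derivatives. -/
noncomputable def lap2 (f : EuclideanSpace ℝ (Fin 2) → ℝ) (x : EuclideanSpace ℝ (Fin 2)) : ℝ :=
  ∑ i : Fin 2, fderiv ℝ (fun y => fderiv ℝ f y (EuclideanSpace.single i 1)) x
    (EuclideanSpace.single i 1)

open Filter Topology in
/-- Divergence theorem on the whole plane for an integrable `C¹` field with integrable divergence.
Only the divergence, and not each partial derivative, has to be integrable: the field is
multiplied by the cutoffs `f(x/(n+1))`, whose gradients are `O(1/n)`. -/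
lemma integral_div_eq_zero (V : Fin 2 → EuclideanSpace ℝ (Fin 2) → ℝ)
    (hV : ∀ i, ContDiff ℝ 1 (V i)) (hint : ∀ i, Integrable (V i))
    (hdiv : Integrable (fun x => ∑ i, fderiv ℝ (V i) x (EuclideanSpace.single i 1))) :
    ∫ x, ∑ i, fderiv ℝ (V i) x (EuclideanSpace.single i 1) = 0 := by
  let f : ContDiffBump (0 : EuclideanSpace ℝ (Fin 2)) := ⟨1, 2, one_pos, one_lt_two⟩
  have hfC : ContDiff ℝ 1 f := f.contDiff
  obtain ⟨M, hM⟩ : ∃ M, ∀ x, ‖fderiv ℝ f x‖ ≤ M :=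
    (f.hasCompactSupport.fderiv (𝕜 := ℝ)).exists_bound_of_continuous
      (hfC.continuous_fderiv one_ne_zero)
  let t : ℕ → ℝ := fun n => ((n : ℝ) + 1)⁻¹
  have ht : ∀ n, 0 < t n := fun n => by positivity
  have htlim : Tendsto t atTop (𝓝 0) := by
    simpa [t, one_div] using tendsto_one_div_add_atTop_nhds_zero_nat (𝕜 := ℝ)
  let g : ℕ → EuclideanSpace ℝ (Fin 2) → ℝ := fun n x => f (t n • x)
  have hgC : ∀ n, ContDiff ℝ 1 (g n) := fun n => hfC.comp (contDiff_const_smul _)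
  have hgs : ∀ n, HasCompactSupport (g n) := fun n => f.hasCompactSupport.comp_smul (ht n).ne'
  have hgd : ∀ n x v, fderiv ℝ (g n) x v = t n * fderiv ℝ f (t n • x) v := by
    intro n x v
    have h1 : HasFDerivAt (g n) ((fderiv ℝ f (t n • x)).comp
        (t n • ContinuousLinearMap.id ℝ (EuclideanSpace ℝ (Fin 2)))) x :=
      ((hfC.differentiable one_ne_zero).differentiableAt.hasFDerivAt).comp x
        ((hasFDerivAt_id x).const_smul (t n))
    rw [h1.fderiv]; simp
  have hgb : ∀ n x i, |fderiv ℝ (g n) x (EuclideanSpace.single i (1:ℝ))| ≤ t n * M := by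
    intro n x i
    rw [hgd, abs_mul, abs_of_pos (ht n)]
    gcongr
    have := (fderiv ℝ f (t n • x)).le_opNorm (EuclideanSpace.single i (1:ℝ))
    simp only [PiLp.norm_single, norm_one, mul_one] at this
    exact this.trans (hM _)
  have hcd : ∀ i, Continuous (fun x => fderiv ℝ (V i) x (EuclideanSpace.single i (1:ℝ))) :=
    fun i => ((hV i).continuous_fderiv one_ne_zero).clm_apply continuous_const
  have hcg : ∀ n i, Continuous (fun x => fderiv ℝ (g n) x (EuclideanSpace.single i (1:ℝ))) :=
    fun n i => ((hgC n).continuous_fderiv one_ne_zero).clm_apply continuous_const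
  have hi1 : ∀ n i, Integrable
      (fun x => g n x * fderiv ℝ (V i) x (EuclideanSpace.single i (1:ℝ))) := fun n i =>
    (((hgC n).continuous).mul (hcd i)).integrable_of_hasCompactSupport ((hgs n).mul_right)
  have hi2 : ∀ n i, Integrable
      (fun x => fderiv ℝ (g n) x (EuclideanSpace.single i (1:ℝ)) * V i x) := fun n i =>
    ((hcg n i).mul (hV i).continuous).integrable_of_hasCompactSupport
      (((hgs n).fderiv_apply (𝕜 := ℝ) _).mul_right)
  have hi3 : ∀ n i, Integrable (fun x => g n x * V i x) := fun n i =>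
    (((hgC n).continuous).mul (hV i).continuous).integrable_of_hasCompactSupport
      ((hgs n).mul_right)
  have hparts : ∀ n, ∫ x, g n x * ∑ i, fderiv ℝ (V i) x (EuclideanSpace.single i 1)
      = - ∑ i, ∫ x, fderiv ℝ (g n) x (EuclideanSpace.single i (1:ℝ)) * V i x := by
    intro n
    simp_rw [Finset.mul_sum]
    rw [integral_finsetSum _ (fun i _ => hi1 n i), ← Finset.sum_neg_distrib]
    refine Finset.sum_congr rfl fun i _ => ?_
    exact integral_mul_fderiv_eq_neg_fderiv_mul_of_integrable (hi2 n i) (hi1 n i) (hi3 n i)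
      (fun x _ => ((hgC n).differentiable one_ne_zero).differentiableAt)
      (fun x _ => ((hV i).differentiable one_ne_zero).differentiableAt)
  have hbound : ∀ n, ‖∫ x, g n x * ∑ i, fderiv ℝ (V i) x (EuclideanSpace.single i 1)‖
      ≤ t n * (M * ∑ i, ∫ x, ‖V i x‖) := by
    intro n
    rw [hparts, norm_neg, ← mul_assoc, Finset.mul_sum]
    refine (norm_sum_le _ _).trans (Finset.sum_le_sum fun i _ => ?_)
    rw [← integral_const_mul]
    refine norm_integral_le_of_norm_le ((hint i).norm.const_mul _) (Eventually.of_forall fun x => ?_)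
    rw [norm_mul]
    exact mul_le_mul_of_nonneg_right (hgb n x i) (norm_nonneg _)
  have hlim0 : Tendsto (fun n => ∫ x, g n x * ∑ i, fderiv ℝ (V i) x (EuclideanSpace.single i 1))
      atTop (𝓝 0) := by
    refine squeeze_zero_norm hbound ?_
    simpa using htlim.mul_const (M * ∑ i, ∫ x, ‖V i x‖)
  have hlim1 : Tendsto (fun n => ∫ x, g n x * ∑ i, fderiv ℝ (V i) x (EuclideanSpace.single i 1))
      atTop (𝓝 (∫ x, ∑ i, fderiv ℝ (V i) x (EuclideanSpace.single i 1))) := by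
    refine tendsto_integral_of_dominated_convergence _ (fun n => ?_) hdiv.norm (fun n => ?_) ?_
    · exact ((hgC n).continuous.aestronglyMeasurable).mul hdiv.aestronglyMeasurable
    · refine Eventually.of_forall fun x => ?_
      rw [norm_mul]
      refine mul_le_of_le_one_left (norm_nonneg _) ?_
      rw [Real.norm_of_nonneg f.nonneg]
      exact f.le_one
    · refine Eventually.of_forall fun x => ?_
      have h1 : Tendsto (fun n => g n x) atTop (𝓝 (f ((0:ℝ) • x))) :=
        (f.continuous.tendsto _).comp (htlim.smul_const x)
      have h2 : f ((0:ℝ) • x) = 1 := by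
        rw [zero_smul]; exact f.one_of_mem_closedBall (by simp [f])
      rw [h2] at h1
      simpa using h1.mul_const (∑ i, fderiv ℝ (V i) x (EuclideanSpace.single i 1))
  exact tendsto_nhds_unique hlim1 hlim0

lemma norm_sq_clm_eq (L : EuclideanSpace ℝ (Fin 2) →L[ℝ] ℝ) :
    ‖L‖ ^ 2 = L (EuclideanSpace.single 0 1) ^ 2 + L (EuclideanSpace.single 1 1) ^ 2 := by
  obtain ⟨v, rfl⟩ := (InnerProductSpace.toDual ℝ (EuclideanSpace ℝ (Fin 2))).surjective L
  rw [LinearIsometryEquiv.norm_map, EuclideanSpace.norm_sq_eq]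
  simp [InnerProductSpace.toDual_apply_apply, EuclideanSpace.inner_single_right]

lemma integrable_exp_neg_mul_norm {c : ℝ} (hc : 0 < c) :
    Integrable (fun x : EuclideanSpace ℝ (Fin 2) => Real.exp (-c * ‖x‖)) := by
  have hb : Integrable (fun x : EuclideanSpace ℝ (Fin 2) =>
      (6 * Real.exp c / c ^ 3) * (1 + ‖x‖) ^ (-(3:ℝ))) :=
    (integrable_one_add_norm (by simp; norm_num)).const_mul _
  refine hb.mono' (by fun_prop) (Filter.Eventually.of_forall fun x => ?_)
  have h0 := norm_nonneg x
  have h1 := Real.pow_div_factorial_le_exp (x := c * (1 + ‖x‖)) (by positivity) 3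
  have h2 : Real.exp (-c * ‖x‖) = Real.exp c / Real.exp (c * (1 + ‖x‖)) := by
    rw [← Real.exp_sub]; congr 1; ring
  have h3 : (1 + ‖x‖) ^ (-(3:ℝ)) = ((1 + ‖x‖) ^ 3)⁻¹ := by
    rw [Real.rpow_neg (by positivity)]; norm_cast
  rw [Real.norm_of_nonneg (Real.exp_pos _).le, h2, h3]
  calc Real.exp c / Real.exp (c * (1 + ‖x‖))
      ≤ Real.exp c / ((c * (1 + ‖x‖)) ^ 3 / (Nat.factorial 3 : ℕ)) := by gcongr
    _ = _ := by simp [Nat.factorial]; field_simp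

/-- The vector field `Q∇Q + (x·∇Q)∇Q - x|∇Q|²/2 + x(Q⁴/4 - Q²/2)`, the sum of the energy field
`Q∇Q` and the Pohozaev field. -/
noncomputable def pohoField (Q : EuclideanSpace ℝ (Fin 2) → ℝ) (i : Fin 2)
    (x : EuclideanSpace ℝ (Fin 2)) : ℝ :=
  Q x * fderiv ℝ Q x (EuclideanSpace.single i 1)
    + (x 0 * fderiv ℝ Q x (EuclideanSpace.single 0 1)
      + x 1 * fderiv ℝ Q x (EuclideanSpace.single 1 1)) * fderiv ℝ Q x (EuclideanSpace.single i 1)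
    - x i * (fderiv ℝ Q x (EuclideanSpace.single 0 1) ^ 2
      + fderiv ℝ Q x (EuclideanSpace.single 1 1) ^ 2) / 2
    + x i * (Q x ^ 4 / 4 - Q x ^ 2 / 2)

lemma contDiff_partial {Q : EuclideanSpace ℝ (Fin 2) → ℝ} (hQ : ContDiff ℝ (⊤ : ℕ∞) Q)
    (v : EuclideanSpace ℝ (Fin 2)) : ContDiff ℝ 1 (fun x => fderiv ℝ Q x v) :=
  ContDiff.clm_apply (hQ.fderiv_right (m := 1) (by norm_cast)) contDiff_const

lemma contDiff_pohoField {Q : EuclideanSpace ℝ (Fin 2) → ℝ} (hQ : ContDiff ℝ (⊤ : ℕ∞) Q)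
    (i : Fin 2) : ContDiff ℝ 1 (pohoField Q i) := by
  have h0 : ContDiff ℝ 1 Q := hQ.of_le (by norm_cast)
  have h1 := contDiff_partial hQ
  have h2 : ∀ j : Fin 2, ContDiff ℝ 1 (fun x : EuclideanSpace ℝ (Fin 2) => x j) := fun j => by
    fun_prop
  unfold pohoField
  exact ((((h0.mul (h1 _)).add ((((h2 0).mul (h1 _)).add ((h2 1).mul (h1 _))).mul (h1 _))).sub
    (((h2 i).mul (((h1 _).pow 2).add ((h1 _).pow 2))).div_const 2)).add
    ((h2 i).mul (((h0.pow 4).div_const 4).sub ((h0.pow 2).div_const 2))))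

/-- The second-order terms in the divergence combine, by symmetry of the Hessian, into
`(Q + x·∇Q) ΔQ`, which the equation eliminates. -/
lemma div_pohoField {Q : EuclideanSpace ℝ (Fin 2) → ℝ} (hQ : ContDiff ℝ (⊤ : ℕ∞) Q)
    (hODE : ∀ x, - lap2 Q x + Q x - Q x ^ 3 = 0) (x : EuclideanSpace ℝ (Fin 2)) :
    ∑ i, fderiv ℝ (pohoField Q i) x (EuclideanSpace.single i 1)
      = ‖fderiv ℝ Q x‖ ^ 2 - Q x ^ 4 / 2 := by
  have h0 : HasFDerivAt Q (fderiv ℝ Q x) x :=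
    (hQ.differentiable (by simp)).differentiableAt.hasFDerivAt
  have h1 : ∀ v, HasFDerivAt (fun y => fderiv ℝ Q y v)
      (fderiv ℝ (fun y => fderiv ℝ Q y v) x) x := fun v =>
    ((contDiff_partial hQ v).differentiable one_ne_zero).differentiableAt.hasFDerivAt
  have h2 : ∀ j : Fin 2, HasFDerivAt (fun y : EuclideanSpace ℝ (Fin 2) => y j)
      (EuclideanSpace.proj j : EuclideanSpace ℝ (Fin 2) →L[ℝ] ℝ) x := fun j =>
    (EuclideanSpace.proj j : EuclideanSpace ℝ (Fin 2) →L[ℝ] ℝ).hasFDerivAt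
  have hsym : fderiv ℝ (fun y => fderiv ℝ Q y (EuclideanSpace.single 0 1)) x
        (EuclideanSpace.single 1 1)
      = fderiv ℝ (fun y => fderiv ℝ Q y (EuclideanSpace.single 1 1)) x
        (EuclideanSpace.single 0 1) := by
    have hd : DifferentiableAt ℝ (fderiv ℝ Q) x :=
      ((hQ.fderiv_right (m := 1) (by norm_cast)).differentiable one_ne_zero).differentiableAt
    have key : ∀ v w, fderiv ℝ (fun y => fderiv ℝ Q y v) x w
        = fderiv ℝ (fderiv ℝ Q) x w v := by
      intro v w
      rw [fderiv_clm_apply hd (differentiableAt_const v)]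
      simp
    rw [key, key]
    exact (hQ.contDiffAt.isSymmSndFDerivAt (by
      rw [minSmoothness_of_isRCLikeNormedField]; norm_cast)) _ _
  have h3 : ∀ i, HasFDerivAt (pohoField Q i) _ x := fun i =>
    ((((h0.mul (h1 (EuclideanSpace.single i 1))).add
      ((((h2 0).mul (h1 (EuclideanSpace.single 0 1))).add
        ((h2 1).mul (h1 (EuclideanSpace.single 1 1)))).mul (h1 (EuclideanSpace.single i 1)))).sub
    (((h2 i).mul (((h1 (EuclideanSpace.single 0 1)).pow 2).add
      ((h1 (EuclideanSpace.single 1 1)).pow 2))).mul_const (2⁻¹ : ℝ))).add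
    ((h2 i).mul (((h0.pow 4).mul_const (4⁻¹ : ℝ)).sub ((h0.pow 2).mul_const (2⁻¹ : ℝ)))))
  have hO := hODE x
  simp only [lap2, Fin.sum_univ_two] at hO
  rw [Fin.sum_univ_two, (h3 0).fderiv, (h3 1).fderiv, norm_sq_clm_eq]
  simp
  linear_combination
    (-(Q x + x 0 * fderiv ℝ Q x (EuclideanSpace.single 0 1)
      + x 1 * fderiv ℝ Q x (EuclideanSpace.single 1 1))) * hO
    + (x 0 * fderiv ℝ Q x (EuclideanSpace.single 1 1)
      - x 1 * fderiv ℝ Q x (EuclideanSpace.single 0 1)) * hsym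

lemma norm_mul_exp_le {c : ℝ} (hc : 0 < c) (r : ℝ) : r * Real.exp (-c * r) ≤ 1 / c := by
  have h := Real.add_one_le_exp (c * r)
  have h2 : Real.exp (-c * r) = (Real.exp (c * r))⁻¹ := by rw [← Real.exp_neg]; congr 1; ring
  rw [h2, ← div_eq_mul_inv, div_le_div_iff₀ (Real.exp_pos _) hc]
  linarith

/-- A continuous function that decays exponentially is integrable, and it stays bounded after
multiplication by a coordinate. -/
lemma exp_decay_facts {f : EuclideanSpace ℝ (Fin 2) → ℝ} (hf : Continuous f) {C c : ℝ}
    (hc : 0 < c) (hC : 0 < C) (h : ∀ x, |f x| ≤ C * Real.exp (-c * ‖x‖)) :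
    Integrable f ∧ (∀ x, |f x| ≤ C) ∧ ∀ i x, |x i * f x| ≤ C / c := by
  refine ⟨((integrable_exp_neg_mul_norm hc).const_mul C).mono' hf.aestronglyMeasurable
    (Filter.Eventually.of_forall h), fun x => ?_, fun i x => ?_⟩
  · refine (h x).trans (mul_le_of_le_one_right hC.le (Real.exp_le_one_iff.2 ?_))
    nlinarith [norm_nonneg x]
  · have h1 : |x i| ≤ ‖x‖ := PiLp.norm_apply_le x i
    calc |x i * f x| = |x i| * |f x| := abs_mul _ _
      _ ≤ ‖x‖ * (C * Real.exp (-c * ‖x‖)) := by gcongr; exact h x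
      _ = C * (‖x‖ * Real.exp (-c * ‖x‖)) := by ring
      _ ≤ C * (1 / c) := by gcongr; exact norm_mul_exp_le hc _
      _ = C / c := by ring

lemma integrable_pohoField {Q : EuclideanSpace ℝ (Fin 2) → ℝ} (hQ : ContDiff ℝ (⊤ : ℕ∞) Q)
    {C c : ℝ} (hc : 0 < c) (hC : 0 < C)
    (hdecay : ∀ x, |Q x| ≤ C * Real.exp (-c * ‖x‖) ∧ ‖fderiv ℝ Q x‖ ≤ C * Real.exp (-c * ‖x‖))
    (i : Fin 2) : Integrable (pohoField Q i) := by
  obtain ⟨iQ, bQ, xQ⟩ := exp_decay_facts hQ.continuous hc hC fun x => (hdecay x).1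
  have hp : ∀ j : Fin 2, Continuous fun x => fderiv ℝ Q x (EuclideanSpace.single j 1) :=
    fun j => (contDiff_partial hQ _).continuous
  have hpd : ∀ (j : Fin 2) x,
      |fderiv ℝ Q x (EuclideanSpace.single j 1)| ≤ C * Real.exp (-c * ‖x‖) := fun j x => by
    have := (fderiv ℝ Q x).le_opNorm (EuclideanSpace.single j (1:ℝ))
    simp only [PiLp.norm_single, norm_one, mul_one] at this
    exact this.trans (hdecay x).2
  have P := fun j => exp_decay_facts (hp j) hc hC (hpd j)
  have hx : ∀ j : Fin 2, Continuous fun x : EuclideanSpace ℝ (Fin 2) => x j := fun j => by fun_prop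
  have T1 := (P i).1.bdd_mul hQ.continuous.aestronglyMeasurable (Filter.Eventually.of_forall bQ)
  have T2 := fun j k l => (P l).1.bdd_mul ((hx j).mul (hp k)).aestronglyMeasurable
    (Filter.Eventually.of_forall ((P k).2.2 j))
  have T3 := iQ.bdd_mul ((hx i).mul hQ.continuous).aestronglyMeasurable
    (Filter.Eventually.of_forall (xQ i))
  have T4 := T3.bdd_mul (c := C ^ 2) (hQ.continuous.pow 2).aestronglyMeasurable
    (Filter.Eventually.of_forall fun x => by
      rw [Pi.pow_apply, norm_pow]; exact pow_le_pow_left₀ (norm_nonneg _) (bQ x) 2)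
  refine (((((T1.add (T2 0 0 i)).add (T2 1 1 i)).sub
    (((T2 i 0 0).add (T2 i 1 1)).div_const 2)).add (T4.div_const 4)).sub (T3.div_const 2)).congr
    (Filter.Eventually.of_forall fun x => ?_)
  simp [pohoField]
  ring

/-- The rescaled energy on the unit disc in terms of `Q` on the disc of radius `δ⁻¹`. -/
lemma energy_scaling {Q : EuclideanSpace ℝ (Fin 2) → ℝ} {δ : ℝ} (hδ : 0 < δ) (q : ℝ) :
    (1/2) * (∫ x in Metric.ball (0 : EuclideanSpace ℝ (Fin 2)) 1,
            ‖fderiv ℝ (fun y => δ⁻¹ * Q (δ⁻¹ • y) - δ⁻¹ * q) x‖ ^ 2)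
        - (1/4) * (∫ x in Metric.ball (0 : EuclideanSpace ℝ (Fin 2)) 1,
            (δ⁻¹ * Q (δ⁻¹ • x) - δ⁻¹ * q) ^ 4)
      = δ⁻¹ ^ 2 * ((1/2) * (∫ x in Metric.ball (0 : EuclideanSpace ℝ (Fin 2)) δ⁻¹,
            ‖fderiv ℝ Q x‖ ^ 2)
        - (1/4) * ∫ x in Metric.ball (0 : EuclideanSpace ℝ (Fin 2)) δ⁻¹, (Q x - q) ^ 4) := by
  have hR : 0 < δ⁻¹ := inv_pos.2 hδ
  have h1 : ∀ x, ‖fderiv ℝ (fun y => δ⁻¹ * Q (δ⁻¹ • y) - δ⁻¹ * q) x‖ ^ 2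
      = δ⁻¹ ^ 4 * ‖fderiv ℝ Q (δ⁻¹ • x)‖ ^ 2 := fun x => by
    have h : (fun y => δ⁻¹ * Q (δ⁻¹ • y) - δ⁻¹ * q)
        = fun y => (δ⁻¹ • fun y => Q (δ⁻¹ • y)) y - δ⁻¹ * q := by
      ext y; simp
    rw [h, fderiv_sub_const, fderiv_const_smul_field, Pi.smul_apply, fderiv_comp_smul, norm_smul,
      norm_smul,
      Real.norm_of_nonneg hR.le]
    ring
  have h2 : ∀ x, (δ⁻¹ * Q (δ⁻¹ • x) - δ⁻¹ * q) ^ 4 = δ⁻¹ ^ 4 * (Q (δ⁻¹ • x) - q) ^ 4 :=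
    fun x => by ring
  have h3 : ∀ f : EuclideanSpace ℝ (Fin 2) → ℝ,
      ∫ x in Metric.ball (0 : EuclideanSpace ℝ (Fin 2)) 1, δ⁻¹ ^ 4 * f (δ⁻¹ • x)
        = δ⁻¹ ^ 2 * ∫ x in Metric.ball (0 : EuclideanSpace ℝ (Fin 2)) δ⁻¹, f x := fun f => by
    rw [integral_const_mul, Measure.setIntegral_comp_smul_of_pos _ _ _ hR, smul_unitBall_of_pos hR,
      finrank_euclideanSpace_fin, smul_eq_mul, ← mul_assoc]
    congr 1
    field_simp
  simp_rw [h1, h2]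
  rw [h3 (fun x => ‖fderiv ℝ Q x‖ ^ 2), h3 (fun x => (Q x - q) ^ 4)]
  ring

/-- Energy estimate on the disc of radius `R` for `Q` shifted by a small constant `q`. -/
lemma energy_ball_le {Q : EuclideanSpace ℝ (Fin 2) → ℝ} (hQ : ContDiff ℝ (⊤ : ℕ∞) Q)
    (hpos : ∀ x, 0 < Q x) (hODE : ∀ x, - lap2 Q x + Q x - Q x ^ 3 = 0)
    {C c : ℝ} (hc : 0 < c) (hC : 0 < C)
    (hdecay : ∀ x, |Q x| ≤ C * Real.exp (-c * ‖x‖) ∧ ‖fderiv ℝ Q x‖ ≤ C * Real.exp (-c * ‖x‖)) :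
    ∃ A > 0, ∀ R q : ℝ, 1 ≤ R → 0 < q → q ≤ C * Real.exp (-c * R) →
      |(1/2) * (∫ x in Metric.ball (0 : EuclideanSpace ℝ (Fin 2)) R, ‖fderiv ℝ Q x‖ ^ 2)
        - (1/4) * ∫ x in Metric.ball (0 : EuclideanSpace ℝ (Fin 2)) R, (Q x - q) ^ 4|
        ≤ A * R ^ 2 * Real.exp (-c * R) := by
  obtain ⟨iQ, bQ, -⟩ := exp_decay_facts hQ.continuous hc hC fun x => (hdecay x).1
  have hcd : Continuous (fun x => ‖fderiv ℝ Q x‖ ^ 2) :=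
    (hQ.continuous_fderiv (by simp)).norm.pow 2
  have hcg : Continuous (fun x => ‖fderiv ℝ Q x‖ ^ 2 - Q x ^ 4 / 2) :=
    hcd.sub ((hQ.continuous.pow 4).div_const 2)
  set K : ℝ := C ^ 2 + C ^ 4 / 2 with hK
  have hK0 : 0 < K := by positivity
  have hg : ∀ x, ‖‖fderiv ℝ Q x‖ ^ 2 - Q x ^ 4 / 2‖
      ≤ K * Real.exp (-c * ‖x‖) * Real.exp (-c * ‖x‖) := fun x => by
    obtain ⟨h1, h2⟩ := hdecay x
    have hu := Real.exp_pos (-c * ‖x‖)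
    have hu1 : Real.exp (-c * ‖x‖) ≤ 1 := Real.exp_le_one_iff.2 (by nlinarith [norm_nonneg x])
    set u := Real.exp (-c * ‖x‖)
    have h3 : ‖fderiv ℝ Q x‖ ^ 2 ≤ C ^ 2 * u ^ 2 := by
      rw [← mul_pow]; exact pow_le_pow_left₀ (norm_nonneg _) h2 2
    have h4 : Q x ^ 4 ≤ C ^ 4 * u ^ 2 := by
      calc Q x ^ 4 ≤ (C * u) ^ 4 := pow_le_pow_left₀ (hpos x).le ((le_abs_self _).trans h1) 4
        _ = C ^ 4 * u ^ 2 * u ^ 2 := by ring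
        _ ≤ C ^ 4 * u ^ 2 := mul_le_of_le_one_right (by positivity) (by nlinarith)
    have h5 : 0 ≤ Q x ^ 4 := by positivity
    have h6 : K * u * u = C ^ 2 * u ^ 2 + C ^ 4 * u ^ 2 / 2 := by rw [hK]; ring
    rw [h6, Real.norm_eq_abs, abs_le]
    constructor <;> nlinarith [sq_nonneg (‖fderiv ℝ Q x‖)]
  have ie := integrable_exp_neg_mul_norm hc
  have ig : Integrable (fun x => ‖fderiv ℝ Q x‖ ^ 2 - Q x ^ 4 / 2) := by
    refine (ie.const_mul K).mono' hcg.aestronglyMeasurable (Filter.Eventually.of_forall fun x => ?_)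
    refine (hg x).trans (mul_le_of_le_one_right (by positivity) (Real.exp_le_one_iff.2 ?_))
    nlinarith [norm_nonneg x]
  have hzero : ∫ x, (‖fderiv ℝ Q x‖ ^ 2 - Q x ^ 4 / 2) = 0 := by
    have h := integral_div_eq_zero (pohoField Q) (contDiff_pohoField hQ)
      (integrable_pohoField hQ hc hC hdecay)
    simp_rw [div_pohoField hQ hODE] at h
    exact h ig
  set J := ∫ x : EuclideanSpace ℝ (Fin 2), Real.exp (-c * ‖x‖)
  have hJ : 0 ≤ J := integral_nonneg fun x => (Real.exp_pos _).le
  set v := (volume : Measure (EuclideanSpace ℝ (Fin 2))).real (Metric.ball 0 1)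
  have hv : 0 ≤ v := measureReal_nonneg
  refine ⟨K * J + C ^ 4 * v + 1, by positivity, fun R q hR hq hqR => ?_⟩
  set w := Real.exp (-c * R)
  have hw : 0 < w := Real.exp_pos _
  have hw1 : w ≤ 1 := Real.exp_le_one_iff.2 (by nlinarith)
  set B := Metric.ball (0 : EuclideanSpace ℝ (Fin 2)) R
  have hBm : MeasurableSet B := measurableSet_ball
  have onB : ∀ f : EuclideanSpace ℝ (Fin 2) → ℝ, Continuous f → IntegrableOn f B := fun f hf =>
    (hf.locallyIntegrable.integrableOn_isCompact (isCompact_closedBall 0 R)).mono_set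
      Metric.ball_subset_closedBall
  have htail : |∫ x in B, (‖fderiv ℝ Q x‖ ^ 2 - Q x ^ 4 / 2)| ≤ K * w * J := by
    have h1 := integral_add_compl hBm ig
    rw [hzero] at h1
    rw [eq_neg_of_add_eq_zero_left h1, abs_neg]
    have h2 : ‖∫ x in Bᶜ, (‖fderiv ℝ Q x‖ ^ 2 - Q x ^ 4 / 2)‖
        ≤ ∫ x in Bᶜ, K * w * Real.exp (-c * ‖x‖) := by
      refine norm_integral_le_of_norm_le (ie.const_mul _).integrableOn ?_
      refine (ae_restrict_iff' hBm.compl).2 (Filter.Eventually.of_forall fun x hx => ?_)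
      have hx' : R ≤ ‖x‖ := by simpa [B] using hx
      refine (hg x).trans ?_
      have : Real.exp (-c * ‖x‖) ≤ w := Real.exp_le_exp.2 (by nlinarith)
      gcongr
    refine h2.trans ?_
    rw [← integral_const_mul]
    exact setIntegral_le_integral (ie.const_mul _)
      (Filter.Eventually.of_forall fun x => by positivity)
  have hvol : (volume : Measure (EuclideanSpace ℝ (Fin 2))).real B = R ^ 2 * v := by
    simp only [B, v, measureReal_def]
    rw [Measure.addHaar_ball _ _ (by linarith : (0:ℝ) ≤ R), finrank_euclideanSpace_fin,
      ENNReal.toReal_mul, ENNReal.toReal_ofReal (by positivity)]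
  have hshift : |∫ x in B, ((Q x - q) ^ 4 - Q x ^ 4)| ≤ 4 * C ^ 4 * w * (R ^ 2 * v) := by
    rw [← hvol, ← Real.norm_eq_abs]
    refine norm_setIntegral_le_of_norm_le_const measure_ball_lt_top fun x _ => ?_
    have hQ1 : Q x ≤ C := (le_abs_self _).trans (bQ x)
    have hQ0 := hpos x
    have hq1 : q ≤ C := hqR.trans (mul_le_of_le_one_right hC.le hw1)
    have e : (Q x - q) ^ 4 - Q x ^ 4
        = (-q) * (((Q x - q) + Q x) * ((Q x - q) ^ 2 + Q x ^ 2)) := by ring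
    rw [e, Real.norm_eq_abs, abs_mul, abs_neg, abs_of_pos hq, abs_mul]
    have a1 : |(Q x - q) + Q x| ≤ 2 * C := abs_le.2 ⟨by linarith, by linarith⟩
    have a2 : |(Q x - q) ^ 2 + Q x ^ 2| ≤ 2 * C ^ 2 := by
      rw [abs_of_nonneg (by positivity)]
      have b1 : (Q x - q) ^ 2 ≤ C ^ 2 := sq_le_sq' (by linarith) (by linarith)
      have b2 : Q x ^ 2 ≤ C ^ 2 := sq_le_sq' (by linarith) (by linarith)
      linarith
    calc q * (|(Q x - q) + Q x| * |(Q x - q) ^ 2 + Q x ^ 2|)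
        ≤ (C * w) * ((2 * C) * (2 * C ^ 2)) := by gcongr
      _ = 4 * C ^ 4 * w := by ring
  have hsplit : (1/2) * (∫ x in B, ‖fderiv ℝ Q x‖ ^ 2) - (1/4) * ∫ x in B, (Q x - q) ^ 4
      = (1/2) * (∫ x in B, (‖fderiv ℝ Q x‖ ^ 2 - Q x ^ 4 / 2))
        - (1/4) * ∫ x in B, ((Q x - q) ^ 4 - Q x ^ 4) := by
    have c4 : Continuous (fun x => Q x ^ 4) := hQ.continuous.pow 4
    have cq : Continuous (fun x => (Q x - q) ^ 4) := (hQ.continuous.sub continuous_const).pow 4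
    rw [integral_sub (onB _ hcd) (onB _ (c4.div_const 2)), integral_sub (onB _ cq) (onB _ c4),
      integral_div]
    ring
  rw [hsplit]
  have hR2 : 1 ≤ R ^ 2 := by nlinarith
  have f1 : K * w * J ≤ (K * J) * R ^ 2 * w := by
    have : 0 ≤ K * w * J := by positivity
    nlinarith
  have f2 : 0 ≤ R ^ 2 * w := by positivity
  have f3 : 0 ≤ K * w * J := by positivity
  obtain ⟨t1, t2⟩ := abs_le.1 htail
  obtain ⟨s1, s2⟩ := abs_le.1 hshift
  rw [abs_le]
  constructor <;> nlinarith

theorem stmt10 (Q : EuclideanSpace ℝ (Fin 2) → ℝ)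
    (hsmooth : ContDiff ℝ (⊤ : ℕ∞) Q) (hpos : ∀ x, 0 < Q x)
    (hrad : ∀ x y : EuclideanSpace ℝ (Fin 2), ‖x‖ = ‖y‖ → Q x = Q y)
    (hODE : ∀ x, - lap2 Q x + Q x - Q x ^ 3 = 0)
    (hdecay : ∃ C > (0:ℝ), ∃ c > (0:ℝ), ∀ x,
      |Q x| ≤ C * Real.exp (-c * ‖x‖) ∧ ‖fderiv ℝ Q x‖ ≤ C * Real.exp (-c * ‖x‖)) :
    ∃ c > (0:ℝ), ∃ C > (0:ℝ), ∀ δ : ℝ, 0 < δ → δ < 1 →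
      |(1/2) * (∫ x in Metric.ball (0 : EuclideanSpace ℝ (Fin 2)) 1,
            ‖fderiv ℝ (fun y => δ⁻¹ * Q (δ⁻¹ • y)
              - δ⁻¹ * Q (δ⁻¹ • EuclideanSpace.single (0 : Fin 2) (1:ℝ))) x‖ ^ 2)
        - (1/4) * (∫ x in Metric.ball (0 : EuclideanSpace ℝ (Fin 2)) 1,
            (δ⁻¹ * Q (δ⁻¹ • x)
              - δ⁻¹ * Q (δ⁻¹ • EuclideanSpace.single (0 : Fin 2) (1:ℝ))) ^ 4)|
        ≤ C * Real.exp (-c / δ) := by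
  obtain ⟨C, hC, c, hc, hd⟩ := hdecay
  obtain ⟨A, hA, hmain⟩ := energy_ball_le hsmooth hpos hODE hc hC hd
  refine ⟨c / 2, by positivity, A * (384 / c ^ 4), by positivity, fun δ hδ hδ1 => ?_⟩
  rw [energy_scaling hδ]
  have hR : 1 ≤ δ⁻¹ := (one_le_inv₀ hδ).2 hδ1.le
  have hR0 : 0 < δ⁻¹ := inv_pos.2 hδ
  have hq := (hd (δ⁻¹ • EuclideanSpace.single (0 : Fin 2) (1:ℝ))).1
  rw [norm_smul, PiLp.norm_single, norm_one, mul_one, Real.norm_of_nonneg hR0.le] at hq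
  have h := hmain δ⁻¹ _ hR (hpos _) ((le_abs_self _).trans hq)
  rw [abs_mul, abs_of_pos (by positivity : (0:ℝ) < δ⁻¹ ^ 2)]
  -- Half of the exponential rate absorbs the polynomial factor `δ⁻⁴`.
  have h4 := Real.pow_div_factorial_le_exp (x := c / 2 * δ⁻¹) (by positivity) 4
  have h5 : δ⁻¹ ^ 4 ≤ 384 / c ^ 4 * Real.exp (c / 2 * δ⁻¹) := by
    calc δ⁻¹ ^ 4 = 384 / c ^ 4 * ((c / 2 * δ⁻¹) ^ 4 / (Nat.factorial 4 : ℕ)) := by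
          simp only [Nat.factorial]; push_cast; field_simp; norm_num
      _ ≤ _ := by gcongr
  have h6 : Real.exp (-(c / 2) / δ) = Real.exp (c / 2 * δ⁻¹) * Real.exp (-c * δ⁻¹) := by
    rw [← Real.exp_add]; congr 1; rw [div_eq_mul_inv]; ring
  rw [h6]
  calc _ ≤ δ⁻¹ ^ 2 * (A * δ⁻¹ ^ 2 * Real.exp (-c * δ⁻¹)) := by gcongr
    _ = A * Real.exp (-c * δ⁻¹) * δ⁻¹ ^ 4 := by ring
    _ ≤ A * Real.exp (-c * δ⁻¹) * (384 / c ^ 4 * Real.exp (c / 2 * δ⁻¹)) := by gcongr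
    _ = _ := by ring
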